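/- Suppose u* ∈ ℝⁿ satisfies AᵀAu* = Aᵀb and Lu* = g, let γ > 0, and let u_γ ∈ ℝⁿ minimize J_γ over ℝⁿ. Then for every integer k ∈ ℤ one has the estimate ‖Au* − Au_γ‖² ≤ γ^(−2k) (‖Au*‖² + γ(‖Aᵀb‖² + N(g)²)), obtained by comparing J_γ(u_γ) with J_γ evaluated at the competitor v_k = (1 + γ^(−k))u*. -/

import Mathlib

open scoped Matrix RealInnerProductSpace

/-- Multiplication of a Euclidean vector by a real matrix, landing in Euclidean space
(so that `‖·‖` and `⟪·,·⟫` denote the Euclidean norm and inner product). -/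
noncomputable def mulE {m n : ℕ} (A : Matrix (Fin m) (Fin n) ℝ)
    (v : EuclideanSpace ℝ (Fin n)) : EuclideanSpace ℝ (Fin m) :=
  Matrix.toEuclideanLin A v

/-- The stabilized-regularized functional
`J_γ(v) = ½‖Av − b‖² − ½‖b‖² + (γ/2)‖AᵀAv − Aᵀb‖² + (γ/2) N(Lv − g)²`,
where `N` is a seminorm on `ℝᵖ`. -/
noncomputable def Jg {m n p : ℕ} (A : Matrix (Fin m) (Fin n) ℝ)
    (b : EuclideanSpace ℝ (Fin m)) (L : Matrix (Fin p) (Fin n) ℝ)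
    (g : EuclideanSpace ℝ (Fin p)) (N : Seminorm ℝ (EuclideanSpace ℝ (Fin p)))
    (γ : ℝ) (v : EuclideanSpace ℝ (Fin n)) : ℝ :=
  (1 / 2) * ‖mulE A v - b‖ ^ 2 - (1 / 2) * ‖b‖ ^ 2
    + (γ / 2) * ‖mulE Aᵀ (mulE A v) - mulE Aᵀ b‖ ^ 2
    + (γ / 2) * (N (mulE L v - g)) ^ 2

/-!
If `A⋆A u = A⋆b` and `L u = g`, then `A u - b` is orthogonal to the range of `A`, so by Pythagoras
`J_γ(v) = J_γ(u) + ½ E_γ(v - u)` for every `v`, where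
`E_γ(w) = ‖A w‖² + γ (‖A⋆A w‖² + N(L w)²)` is homogeneous of degree two. Comparing a point with the
competitor `(1 + t) u` therefore bounds its `E_γ`-distance to `u` by `|t|² E_γ(u)`; the estimate is
the case `t = γ⁻ᵏ`. The case `t = 0` shows that a minimizer has in fact the same image under `A`
as `u`.
-/

theorem sq_norm_zpow_neg (x : ℝ) (k : ℤ) : ‖x ^ (-k)‖ ^ 2 = x ^ (-(2 * k)) := by
  rw [Real.norm_eq_abs, sq_abs, ← zpow_natCast, ← zpow_mul, Nat.cast_ofNat, neg_mul, mul_comm]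

theorem inner_toEuclideanLin_left {𝕜 m n : Type*} [RCLike 𝕜] [Fintype m] [Fintype n]
    [DecidableEq m] [DecidableEq n] (A : Matrix m n 𝕜) (x : EuclideanSpace 𝕜 n)
    (y : EuclideanSpace 𝕜 m) :
    inner 𝕜 (A.toEuclideanLin x) y = inner 𝕜 x (Aᴴ.toEuclideanLin y) := by
  rw [Matrix.toEuclideanLin_conjTranspose_eq_adjoint, LinearMap.adjoint_inner_right]

theorem inner_mulE_left {m n : ℕ} (A : Matrix (Fin m) (Fin n) ℝ) (x : EuclideanSpace ℝ (Fin n))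
    (y : EuclideanSpace ℝ (Fin m)) : ⟪mulE A x, y⟫ = ⟪x, mulE Aᵀ y⟫ := by
  rw [mulE, mulE, inner_toEuclideanLin_left, Matrix.conjTranspose_eq_transpose_of_trivial]

section Functional

variable {𝕜 E F G : Type*} [RCLike 𝕜]
  [SeminormedAddCommGroup E] [InnerProductSpace 𝕜 E]
  [SeminormedAddCommGroup F] [InnerProductSpace 𝕜 F]
  [AddCommGroup G] [Module 𝕜 G]

/-- The stabilized-regularized functional `J_γ` of a linear map `A` between inner product spaces.
The adjoint of `A` is passed as a linear map `S`, which allows incomplete spaces and unbounded `A`;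
the adjunction identity is assumed in the lemmas. -/
noncomputable def stabilizedFunctional (A : E →ₗ[𝕜] F) (S : F →ₗ[𝕜] E) (b : F) (L : E →ₗ[𝕜] G)
    (g : G) (N : Seminorm 𝕜 G) (γ : ℝ) (v : E) : ℝ :=
  (1 / 2) * ‖A v - b‖ ^ 2 - (1 / 2) * ‖b‖ ^ 2
    + (γ / 2) * ‖S (A v) - S b‖ ^ 2 + (γ / 2) * N (L v - g) ^ 2

/-- The energy `E_γ(w) = ‖A w‖² + γ (‖S (A w)‖² + N(L w)²)`, twice the homogeneous quadratic part
of `stabilizedFunctional`. It measures how far a point is from an exact solution. -/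
def stabilizedEnergy (A : E →ₗ[𝕜] F) (S : F →ₗ[𝕜] E) (L : E →ₗ[𝕜] G) (N : Seminorm 𝕜 G)
    (γ : ℝ) (w : E) : ℝ :=
  ‖A w‖ ^ 2 + γ * (‖S (A w)‖ ^ 2 + N (L w) ^ 2)

variable {A : E →ₗ[𝕜] F} {S : F →ₗ[𝕜] E} {b : F} {L : E →ₗ[𝕜] G} {g : G} {N : Seminorm 𝕜 G}
  {γ : ℝ} {u : E}

theorem stabilizedEnergy_smul (t : 𝕜) (w : E) :
    stabilizedEnergy A S L N γ (t • w) = ‖t‖ ^ 2 * stabilizedEnergy A S L N γ w := by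
  simp only [stabilizedEnergy, map_smul, norm_smul, map_smul_eq_mul]
  ring

theorem sq_norm_map_le_stabilizedEnergy (hγ : 0 ≤ γ) (w : E) :
    ‖A w‖ ^ 2 ≤ stabilizedEnergy A S L N γ w :=
  le_add_of_nonneg_right (by positivity)

theorem sq_norm_map_sub_eq_add_of_normal_eq (hadj : ∀ x y, inner 𝕜 (A x) y = inner 𝕜 x (S y))
    (hu : S (A u) = S b) (v : E) :
    ‖A v - b‖ ^ 2 = ‖A (v - u)‖ ^ 2 + ‖A u - b‖ ^ 2 := by
  have horth : inner 𝕜 (A (v - u)) (A u - b) = 0 := by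
    rw [hadj, map_sub, hu, sub_self, inner_zero_right]
  calc ‖A v - b‖ ^ 2 = ‖A (v - u) + (A u - b)‖ ^ 2 := by rw [map_sub, sub_add_sub_cancel]
    _ = ‖A (v - u)‖ ^ 2 + ‖A u - b‖ ^ 2 := by
      rw [norm_add_sq (𝕜 := 𝕜), horth, map_zero, mul_zero, add_zero]

theorem stabilizedFunctional_eq_add_stabilizedEnergy
    (hadj : ∀ x y, inner 𝕜 (A x) y = inner 𝕜 x (S y)) (hu : S (A u) = S b) (hLu : L u = g)
    (v : E) :
    stabilizedFunctional A S b L g N γ v =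
      stabilizedFunctional A S b L g N γ u + (1 / 2) * stabilizedEnergy A S L N γ (v - u) := by
  have hS : S (A v) - S b = S (A (v - u)) := by rw [map_sub, map_sub, hu]
  have hL : L v - g = L (v - u) := by rw [map_sub, hLu]
  simp only [stabilizedFunctional, stabilizedEnergy, hS, hL, hu, hLu, sub_self, norm_zero, map_zero,
    sq_norm_map_sub_eq_add_of_normal_eq hadj hu v]
  ring

theorem stabilizedFunctional_le_iff (hadj : ∀ x y, inner 𝕜 (A x) y = inner 𝕜 x (S y))
    (hu : S (A u) = S b) (hLu : L u = g) {v w : E} :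
    stabilizedFunctional A S b L g N γ v ≤ stabilizedFunctional A S b L g N γ w ↔
      stabilizedEnergy A S L N γ (v - u) ≤ stabilizedEnergy A S L N γ (w - u) := by
  rw [stabilizedFunctional_eq_add_stabilizedEnergy hadj hu hLu v,
    stabilizedFunctional_eq_add_stabilizedEnergy hadj hu hLu w, add_le_add_iff_left,
    mul_le_mul_iff_right₀ one_half_pos]

theorem stmt5_general (hadj : ∀ x y, inner 𝕜 (A x) y = inner 𝕜 x (S y)) (hγ : 0 ≤ γ)
    (hu : S (A u) = S b) (hLu : L u = g) {v : E} {t : 𝕜}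
    (hv : stabilizedFunctional A S b L g N γ v ≤
      stabilizedFunctional A S b L g N γ ((1 + t) • u)) :
    ‖A u - A v‖ ^ 2 ≤ ‖t‖ ^ 2 * (‖A u‖ ^ 2 + γ * (‖S b‖ ^ 2 + N g ^ 2)) := by
  have hcomp : (1 + t) • u - u = t • u := by rw [add_smul, one_smul, add_sub_cancel_left]
  calc ‖A u - A v‖ ^ 2 = ‖A (v - u)‖ ^ 2 := by rw [norm_sub_rev, map_sub]
    _ ≤ stabilizedEnergy A S L N γ (v - u) := sq_norm_map_le_stabilizedEnergy hγ _
    _ ≤ stabilizedEnergy A S L N γ ((1 + t) • u - u) :=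
      (stabilizedFunctional_le_iff hadj hu hLu).mp hv
    _ = ‖t‖ ^ 2 * stabilizedEnergy A S L N γ u := by rw [hcomp, stabilizedEnergy_smul]
    _ = ‖t‖ ^ 2 * (‖A u‖ ^ 2 + γ * (‖S b‖ ^ 2 + N g ^ 2)) := by rw [stabilizedEnergy, hu, hLu]

end Functional

/-- If `u⋆` satisfies `AᵀAu⋆ = Aᵀb` and `Lu⋆ = g`, `γ > 0`, and `uγ` minimizes `J_γ`
over `ℝⁿ`, then for every integer `k` one has
`‖Au⋆ − Auγ‖² ≤ γ^(−2k) (‖Au⋆‖² + γ(‖Aᵀb‖² + N(g)²))`. -/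
theorem stmt5 {m n p : ℕ} (A : Matrix (Fin m) (Fin n) ℝ) (b : EuclideanSpace ℝ (Fin m))
    (L : Matrix (Fin p) (Fin n) ℝ) (g : EuclideanSpace ℝ (Fin p))
    (N : Seminorm ℝ (EuclideanSpace ℝ (Fin p))) (γ : ℝ) (hγ : 0 < γ)
    (ustar : EuclideanSpace ℝ (Fin n))
    (hnormal : mulE Aᵀ (mulE A ustar) = mulE Aᵀ b)
    (hreg : mulE L ustar = g)
    (uγ : EuclideanSpace ℝ (Fin n))
    (hmin : ∀ v : EuclideanSpace ℝ (Fin n), Jg A b L g N γ uγ ≤ Jg A b L g N γ v) :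
    ∀ k : ℤ,
      ‖mulE A ustar - mulE A uγ‖ ^ 2
        ≤ γ ^ (-(2 * k)) * (‖mulE A ustar‖ ^ 2 + γ * (‖mulE Aᵀ b‖ ^ 2 + (N g) ^ 2)) := by
  intro k
  exact sq_norm_zpow_neg γ k ▸ stmt5_general (inner_mulE_left A) hγ.le hnormal hreg
    (hmin ((1 + γ ^ (-k)) • ustar))
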